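/- Let R be a regular domain with a generalized regular system of parameters x = x_1,…,x_p, and let I ⊆ R be an ideal. Then Γ_x(I̅) ⊆ Γ_x(overline{I_0}), i.e., the Newton polyhedron of the integral closure of I is contained in the Newton polyhedron of the integral closure of I_0. -/

import Mathlib

open Ideal Set Pointwise

noncomputable section

namespace NND

variable {R : Type*} [CommRing R] {p : ℕ}

/-- The monomial `x^a = x 0 ^ a 0 * ⋯` in the elements `x`. -/
def mono (x : Fin p → R) (a : Fin p → ℕ) : R := ∏ i, x i ^ a i

/-- A (commutative) ring is regular local if it is Noetherian local and its maximal ideal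
can be generated by `dim R` elements. -/
def IsRegularLocal (A : Type*) [CommRing A] : Prop :=
  IsNoetherianRing A ∧ ∃ h : IsLocalRing A, ∃ s : Finset A,
    Ideal.span (s : Set A) = @IsLocalRing.maximalIdeal A _ h ∧
    (s.card : WithBot (WithTop ℕ)) = ringKrullDim A

/-- A regular domain: an integral domain whose localization at every prime is regular local. -/
def IsRegularDomain (A : Type*) [CommRing A] : Prop :=
  IsDomain A ∧ ∀ (P : Ideal A) (hP : P.IsPrime), IsRegularLocal (@Localization.AtPrime A _ P hP)

/-- `x` is a regular sequence. -/
def IsRegSeq (x : Fin p → R) : Prop :=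
  Ideal.span (Set.range x) ≠ ⊤ ∧
  ∀ i : Fin p, ∀ r : R, r * x i ∈ Ideal.span (x '' {j | j < i}) →
    r ∈ Ideal.span (x '' {j | j < i})

/-- A generalized regular system of parameters: a permutable regular sequence all of whose
subquotients are regular domains. -/
def IsGRSOP (x : Fin p → R) : Prop :=
  (∀ σ : Equiv.Perm (Fin p), IsRegSeq (x ∘ σ)) ∧
  ∀ S : Set (Fin p), IsRegularDomain (R ⧸ Ideal.span (x '' S))

/-- `A` is the exponent set of a monomial representation of `f`:
`h * f = ∑_{a ∈ A} r a * x^a` with `h` and the `r a` outside `(x_1, …, x_p)`. -/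
def IsMonRep (x : Fin p → R) (f : R) (A : Finset (Fin p → ℕ)) : Prop :=
  ∃ (h : R) (r : (Fin p → ℕ) → R),
    h ∉ Ideal.span (Set.range x) ∧ (∀ a ∈ A, r a ∉ Ideal.span (Set.range x)) ∧
    h * f = ∑ a ∈ A, r a * mono x a

/-- A minimal (irredundant) monomial representation: no monomial divides another. -/
def IsMinMonRep (x : Fin p → R) (f : R) (A : Finset (Fin p → ℕ)) : Prop :=
  IsMonRep x f A ∧ ∀ a ∈ A, ∀ b ∈ A, a ≠ b → ¬ mono x a ∣ mono x b

open Classical in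
/-- The support of `f`: the exponent set of its (unique) minimal monomial representation. -/
def supp (x : Fin p → R) (f : R) : Set (Fin p → ℕ) :=
  if h : ∃ A : Finset (Fin p → ℕ), IsMinMonRep x f A then ↑h.choose else ∅

/-- Embedding of exponent vectors into `ℝ^p`. -/
def toR (a : Fin p → ℕ) : Fin p → ℝ := fun i => (a i : ℝ)

/-- The Newton polyhedron of a set of ring elements. -/
def Γ (x : Fin p → R) (S : Set R) : Set (Fin p → ℝ) :=
  convexHull ℝ (toR '' ⋃ f ∈ S, supp x f)

/-- The Newton polyhedron `Γ_x(I)` of an ideal. -/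
def ΓI (x : Fin p → R) (I : Ideal R) : Set (Fin p → ℝ) := Γ x (I : Set R)

/-- The Newton polyhedron `Γ_x(f)` of an element: that of the principal ideal `(f)`. -/
def ΓE (x : Fin p → R) (f : R) : Set (Fin p → ℝ) := ΓI x (Ideal.span {f})

/-- The integral closure of an ideal `I`: elements satisfying an equation of integral
dependence `f^n + a_1 f^{n-1} + ⋯ + a_n = 0` with `a_i ∈ I^i`. -/
def intClosure (I : Ideal R) : Set R :=
  {f | ∃ n : ℕ, 0 < n ∧ ∃ a : ℕ → R, (∀ i ∈ Finset.Icc 1 n, a i ∈ I ^ i) ∧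
    f ^ n + ∑ i ∈ Finset.Icc 1 n, a i * f ^ (n - i) = 0}

/-- The monomial ideal `I_0` spanned by the lattice points of `Γ_x(I)`. -/
def idealZero (x : Fin p → R) (I : Ideal R) : Ideal R :=
  Ideal.span (mono x '' {a | toR a ∈ ΓI x I})

/-- The ideal `K_I` generated by the monomials lying in the integral closure of `I`. -/
def KIdeal (x : Fin p → R) (I : Ideal R) : Ideal R :=
  Ideal.span {m | (∃ a : Fin p → ℕ, m = mono x a) ∧ m ∈ intClosure I}

section helpers

lemma mono_zero (x : Fin p → R) : mono x 0 = 1 := by simp [mono]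

lemma mono_add (x : Fin p → R) (a b : Fin p → ℕ) : mono x (a + b) = mono x a * mono x b := by
  simp [mono, pow_add, Finset.prod_mul_distrib]

lemma mono_nsmul (x : Fin p → R) (n : ℕ) (a : Fin p → ℕ) : mono x (n • a) = mono x a ^ n := by
  induction n with
  | zero => simp [mono_zero]
  | succ n ih => rw [succ_nsmul, mono_add, ih, pow_succ]

lemma mono_dvd (x : Fin p → R) {a b : Fin p → ℕ} (h : a ≤ b) : mono x a ∣ mono x b := by
  refine ⟨mono x (b - a), ?_⟩
  rw [← mono_add, add_tsub_cancel_of_le h]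

lemma mono_single (x : Fin p → R) (i : Fin p) (n : ℕ) :
    mono x (Pi.single i n) = x i ^ n := by
  unfold mono
  rw [Finset.prod_eq_single i]
  · simp
  · intro b _ hb
    simp [Pi.single_eq_of_ne hb]
  · simp

/-- ideal of powers indexed by a finset -/
def PI (x : Fin p → R) (S : Finset (Fin p)) (n : Fin p → ℕ) : Ideal R :=
  Ideal.span ((fun j => x j ^ n j) '' (S : Set (Fin p)))

lemma mem_PI_iff (x : Fin p → R) {S : Finset (Fin p)} {n : Fin p → ℕ} {k : Fin p} (hk : k ∈ S)
    (z : R) : z ∈ PI x S n ↔ ∃ s, z - x k ^ n k * s ∈ PI x (S.erase k) n := by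
  unfold PI
  have : (S : Set (Fin p)) = insert k ((S.erase k : Finset (Fin p)) : Set (Fin p)) := by
    rw [← Finset.coe_insert, Finset.insert_erase hk]
  rw [this, Set.image_insert_eq, Ideal.mem_span_insert]
  constructor
  · rintro ⟨a, w, hw, rfl⟩
    exact ⟨a, by convert hw using 1; ring⟩
  · rintro ⟨s, hs⟩
    exact ⟨s, _, hs, by ring⟩

lemma PI_congr (x : Fin p → R) {S : Finset (Fin p)} {n m : Fin p → ℕ}
    (h : ∀ j ∈ S, n j = m j) : PI x S n = PI x S m := by
  unfold PI
  congr 1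
  apply Set.image_congr
  intro j hj
  simp only [h j hj]

lemma PI_one (x : Fin p → R) {S : Finset (Fin p)} {n : Fin p → ℕ}
    (h : ∀ j ∈ S, n j = 1) : PI x S n = Ideal.span (x '' (S : Set (Fin p))) := by
  unfold PI
  congr 1
  apply Set.image_congr
  intro j hj
  simp only [h j hj, pow_one]

lemma pow_cancel {J : Ideal R} {y : R} (h : ∀ r, y * r ∈ J → r ∈ J) (m : ℕ) :
    ∀ r, y ^ m * r ∈ J → r ∈ J := by
  induction m with
  | zero => intro r hr; simpa using hr
  | succ m ih =>
    intro r hr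
    apply ih
    apply h
    convert hr using 1
    ring

lemma nzd (x : Fin p → R) (hP : ∀ S : Set (Fin p), (Ideal.span (x '' S)).IsPrime)
    (hne : ∀ (S : Set (Fin p)) (i : Fin p), i ∉ S → x i ∉ Ideal.span (x '' S)) :
    ∀ (N : ℕ) (S : Finset (Fin p)) (n : Fin p → ℕ), ∑ j ∈ S, n j ≤ N → ∀ i ∉ S, ∀ r,
      x i * r ∈ PI x S n → r ∈ PI x S n := by
  intro N
  induction N using Nat.strong_induction_on with
  | _ N ih =>
  intro S n hN i hi r hr
  by_cases h0 : ∃ k ∈ S, n k = 0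
  · obtain ⟨k, hk, hk0⟩ := h0
    rw [mem_PI_iff x hk]
    exact ⟨r, by simp [hk0]⟩
  by_cases h1 : ∀ k ∈ S, n k = 1
  · rw [PI_one x h1] at hr ⊢
    exact ((hP _).mem_or_mem hr).resolve_left (hne _ _ (by simpa using hi))
  push Not at h0 h1
  obtain ⟨k, hk, hk1⟩ := h1
  obtain ⟨m, hm⟩ : ∃ m, n k = m + 1 := ⟨n k - 1, by have := h0 k hk; omega⟩
  have hm1 : 1 ≤ m := by omega
  have hupd : ∀ q, PI x (S.erase k) (Function.update n k q) = PI x (S.erase k) n := by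
    intro q
    apply PI_congr
    intro j hj
    rw [Function.update_of_ne (Finset.ne_of_mem_erase hj)]
  have hsum : ∑ j ∈ S, n j = n k + ∑ j ∈ S.erase k, n j := (Finset.add_sum_erase S n hk).symm
  have hsumq : ∀ q, ∑ j ∈ S, Function.update n k q j = q + ∑ j ∈ S.erase k, n j := by
    intro q
    rw [← Finset.add_sum_erase S _ hk, Function.update_self]
    congr 1
    apply Finset.sum_congr rfl
    intro j hj
    rw [Function.update_of_ne (Finset.ne_of_mem_erase hj)]
  have hq : ∀ q, q < n k → ∀ t, x i * t ∈ PI x S (Function.update n k q) →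
      t ∈ PI x S (Function.update n k q) := by
    intro q hq t ht
    exact ih (∑ j ∈ S, Function.update n k q j) (by rw [hsumq]; omega) S _ le_rfl i hi t ht
  have hk' : ∀ t, x k * t ∈ PI x (S.erase k) n → t ∈ PI x (S.erase k) n := by
    intro t ht
    exact ih (∑ j ∈ S.erase k, n j) (by omega) _ _ le_rfl k (by simp) t ht
  obtain ⟨s, hs⟩ := (mem_PI_iff x hk _).1 hr
  have h2 := hq m (by omega) r (by
    rw [mem_PI_iff x hk, hupd, Function.update_self]
    refine ⟨x k * s, ?_⟩
    convert hs using 1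
    rw [hm]; ring)
  rw [mem_PI_iff x hk, hupd, Function.update_self] at h2
  obtain ⟨t, ht⟩ := h2
  have h3 : x k ^ m * (x i * t - x k * s) ∈ PI x (S.erase k) n := by
    have := Ideal.sub_mem _ hs (Ideal.mul_mem_left _ (x i) ht)
    convert this using 1
    rw [hm]; ring
  have h4 := pow_cancel hk' m _ h3
  have h5 := hq 1 (by omega) t (by
    rw [mem_PI_iff x hk, hupd, Function.update_self]
    exact ⟨s, by simpa using h4⟩)
  rw [mem_PI_iff x hk, hupd, Function.update_self] at h5
  obtain ⟨v, hv⟩ := h5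
  rw [mem_PI_iff x hk]
  refine ⟨v, ?_⟩
  have := Ideal.add_mem _ ht (Ideal.mul_mem_left _ (x k ^ m) hv)
  convert this using 1
  rw [hm]; ring

lemma keyPI (x : Fin p → R) (hP : ∀ S : Set (Fin p), (Ideal.span (x '' S)).IsPrime)
    (hne : ∀ (S : Set (Fin p)) (i : Fin p), i ∉ S → x i ∉ Ideal.span (x '' S))
    (b : Fin p → ℕ) (u : R) (T : Finset (Fin p)) :
    u * ∏ i ∈ T, x i ^ b i ∈ PI x Finset.univ (fun i => if i ∈ T then b i + 1 else 1) →
      u ∈ Ideal.span (Set.range x) := by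
  induction T using Finset.induction_on with
  | empty =>
    intro h
    rw [PI_one x (by simp)] at h
    simpa using h
  | insert k T hk ih =>
    intro h
    apply ih
    rw [mem_PI_iff x (Finset.mem_univ k)] at h ⊢
    obtain ⟨s, hs⟩ := h
    have hc : PI x (Finset.univ.erase k) (fun i => if i ∈ insert k T then b i + 1 else 1)
        = PI x (Finset.univ.erase k) (fun i => if i ∈ T then b i + 1 else 1) := by
      apply PI_congr
      intro j hj
      simp [Finset.mem_insert, Finset.ne_of_mem_erase hj]
    rw [hc] at hs
    refine ⟨s, ?_⟩
    simp only [hk, if_false, pow_one]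
    apply pow_cancel (nzd x hP hne _ _ _ le_rfl k (by simp)) (b k)
    convert hs using 1
    rw [Finset.prod_insert hk]
    simp only [Finset.mem_insert_self, if_true]
    ring

/-- The irreducible monomial ideal `(x_i^{b_i+1})`. -/
def mI (x : Fin p → R) (b : Fin p → ℕ) : Ideal R := PI x Finset.univ (fun i => b i + 1)

/-- monomial ideal -/
def MI (x : Fin p → R) (C : Set (Fin p → ℕ)) : Ideal R := Ideal.span (mono x '' C)

/-- The properties of `x` that we use. -/
structure Good (x : Fin p → R) : Prop where
  prime : (Ideal.span (Set.range x)).IsPrime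
  key : ∀ b u, u * mono x b ∈ mI x b → u ∈ Ideal.span (Set.range x)

lemma mono_mem_mI (x : Fin p → R) {b c : Fin p → ℕ} (h : ¬ c ≤ b) : mono x c ∈ mI x b := by
  rw [Pi.le_def] at h
  push Not at h
  obtain ⟨i, hi⟩ := h
  have h1 : x i ^ (b i + 1) ∈ mI x b := Ideal.subset_span ⟨i, by simp, rfl⟩
  have h2 : x i ^ (b i + 1) ∣ mono x c :=
    (pow_dvd_pow _ hi).trans (Finset.dvd_prod_of_mem (fun i => x i ^ c i) (Finset.mem_univ i))
  exact Ideal.mem_of_dvd _ h2 h1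

lemma MI_le_mI (x : Fin p → R) {b : Fin p → ℕ} {C : Set (Fin p → ℕ)} (h : ∀ c ∈ C, ¬ c ≤ b) :
    MI x C ≤ mI x b := by
  unfold MI
  rw [Ideal.span_le]
  rintro _ ⟨c, hc, rfl⟩
  exact mono_mem_mI x (h c hc)

lemma Good.K {x : Fin p → R} (hx : Good x) {b : Fin p → ℕ} {u : R} {C : Set (Fin p → ℕ)}
    (hu : u ∉ Ideal.span (Set.range x)) (h : u * mono x b ∈ MI x C) : ∃ c ∈ C, c ≤ b := by
  by_contra! hc
  exact hu (hx.key b u (MI_le_mI x hc h))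

lemma good_of_grsop {x : Fin p → R} (hx : IsGRSOP x) : Good x := by
  have hP : ∀ S : Set (Fin p), (Ideal.span (x '' S)).IsPrime := by
    intro S
    have := (hx.2 S).1
    exact (Ideal.Quotient.isDomain_iff_prime _).1 this
  have hne : ∀ (S : Set (Fin p)) (i : Fin p), i ∉ S → x i ∉ Ideal.span (x '' S) := by
    intro S i hi hmem
    have hpos : 0 < p := i.pos
    let l : Fin p := ⟨p - 1, by omega⟩
    obtain ⟨h1, h2⟩ := hx.1 (Equiv.swap i l)
    have hsub : x '' S ⊆ (x ∘ Equiv.swap i l) '' {j | j < l} := by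
      rintro _ ⟨j, hj, rfl⟩
      refine ⟨Equiv.swap i l j, ?_, by simp⟩
      have hji : j ≠ i := fun h => hi (h ▸ hj)
      have : Equiv.swap i l j ≠ l := by
        intro h
        apply hji
        have := congrArg (Equiv.swap i l) h
        simpa using this
      have h3 : (Equiv.swap i l j).val ≠ p - 1 := fun h => this (Fin.ext h)
      have h4 := (Equiv.swap i l j).isLt
      show (Equiv.swap i l j).val < p - 1
      omega
    have h5 := h2 l 1 (by simpa using Ideal.span_mono hsub hmem)
    apply h1
    rw [Ideal.eq_top_iff_one]
    exact Ideal.span_mono (Set.image_subset_range _ _) h5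
  refine ⟨by simpa using hP Set.univ, ?_⟩
  intro b u h
  apply keyPI x hP hne b u Finset.univ
  simpa [mono, mI] using h

lemma sum_mem_MI (x : Fin p → R) (A : Finset (Fin p → ℕ)) (C : Set (Fin p → ℕ))
    (r : (Fin p → ℕ) → R) (h : ∀ a ∈ A, a ∈ C) : ∑ a ∈ A, r a * mono x a ∈ MI x C :=
  Ideal.sum_mem _ fun a ha => Ideal.mul_mem_left _ _ (Ideal.subset_span ⟨a, h a ha, rfl⟩)

lemma Good.exists_le {x : Fin p → R} (hx : Good x) {f : R} {A B : Finset (Fin p → ℕ)}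
    (hA : IsMinMonRep x f A) (hB : IsMonRep x f B) {a : Fin p → ℕ} (ha : a ∈ A) :
    ∃ b ∈ B, b ≤ a := by
  classical
  obtain ⟨⟨h, r, hh, hr, e⟩, hmin⟩ := hA
  obtain ⟨h', r', hh', hr', e'⟩ := hB
  have hu : h' * r a ∉ Ideal.span (Set.range x) := by
    intro hm
    exact (hx.prime.mem_or_mem hm).elim hh' (hr a ha)
  have hmem : (h' * r a) * mono x a ∈ MI x ((B : Set (Fin p → ℕ)) ∪ ((A.erase a : Finset _) : Set (Fin p → ℕ))) := by
    have e1 : (h' * r a) * mono x a = h * (∑ b ∈ B, r' b * mono x b)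
        - h' * ∑ b ∈ A.erase a, r b * mono x b := by
      rw [← e', ← Finset.add_sum_erase A _ ha] at *
      linear_combination (-h') * e
    rw [e1]
    apply Ideal.sub_mem
    · exact Ideal.mul_mem_left _ _ (sum_mem_MI x _ _ _ fun b hb => Or.inl (by simpa using hb))
    · exact Ideal.mul_mem_left _ _ (sum_mem_MI x _ _ _ fun b hb => Or.inr hb)
  obtain ⟨c, hc | hc, hca⟩ := hx.K hu hmem
  · exact ⟨c, hc, hca⟩
  · have hc' : c ∈ A.erase a := hc
    rw [Finset.mem_erase] at hc'
    exact absurd (mono_dvd x hca) (hmin c hc'.2 a ha hc'.1)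

lemma Good.rep_subset {x : Fin p → R} (hx : Good x) {f : R} {A B : Finset (Fin p → ℕ)}
    (hA : IsMinMonRep x f A) (hB : IsMinMonRep x f B) : A ⊆ B := by
  intro a ha
  obtain ⟨b, hb, hba⟩ := hx.exists_le hA hB.1 ha
  obtain ⟨c, hc, hcb⟩ := hx.exists_le hB hA.1 hb
  have hca : c = a := by
    by_contra hne
    exact hA.2 c hc a ha hne (mono_dvd x (hcb.trans hba))
  have : b = a := le_antisymm hba (hca ▸ hcb)
  exact this ▸ hb

lemma Good.supp_eq {x : Fin p → R} (hx : Good x) {f : R} {A : Finset (Fin p → ℕ)}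
    (hA : IsMinMonRep x f A) : supp x f = A := by
  unfold supp
  have h : ∃ A : Finset (Fin p → ℕ), IsMinMonRep x f A := ⟨A, hA⟩
  rw [dif_pos h]
  congr 1
  exact Finset.Subset.antisymm (hx.rep_subset h.choose_spec hA) (hx.rep_subset hA h.choose_spec)

lemma Good.one_notMem {x : Fin p → R} (hx : Good x) : (1 : R) ∉ Ideal.span (Set.range x) :=
  fun h => hx.prime.ne_top ((Ideal.eq_top_iff_one _).2 h)

lemma Good.le_of_dvd {x : Fin p → R} (hx : Good x) {a b : Fin p → ℕ}
    (h : mono x a ∣ mono x b) : a ≤ b := by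
  obtain ⟨c, hc, hcb⟩ := hx.K (b := b) (C := {a}) hx.one_notMem (by
    rw [one_mul]
    exact Ideal.mem_of_dvd _ h (Ideal.subset_span ⟨a, rfl, rfl⟩))
  rw [Set.mem_singleton_iff] at hc
  exact hc ▸ hcb

lemma Good.mem_supp_mono {x : Fin p → R} (hx : Good x) (a : Fin p → ℕ) :
    a ∈ supp x (mono x a) := by
  have : IsMinMonRep x (mono x a) {a} := by
    refine ⟨⟨1, fun _ => 1, hx.one_notMem, fun _ _ => hx.one_notMem, by simp⟩, ?_⟩
    intro b hb c hc hbc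
    simp only [Finset.mem_singleton] at hb hc
    exact absurd (hb.trans hc.symm) hbc
  rw [hx.supp_eq this]
  simp

lemma dickson (C : Set (Fin p → ℕ)) : ∃ F : Finset (Fin p → ℕ), (∀ c ∈ F, c ∈ C) ∧
    (∀ c ∈ F, ∀ d ∈ F, c ≤ d → c = d) ∧ ∀ c ∈ C, ∃ d ∈ F, d ≤ c := by
  have hanti : IsAntichain (· ≤ ·) {c | Minimal (· ∈ C) c} := by
    intro a ha b hb hne hab
    exact hne (le_antisymm hab (hb.2 ha.1 hab))
  have hfin : {c | Minimal (· ∈ C) c}.Finite := WellQuasiOrderedLE.finite_of_isAntichain hanti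
  refine ⟨hfin.toFinset, ?_, ?_, ?_⟩
  · intro c hc
    exact ((hfin.mem_toFinset).1 hc).1
  · intro c hc d hd hcd
    exact le_antisymm hcd (((hfin.mem_toFinset).1 hd).2 ((hfin.mem_toFinset).1 hc).1 hcd)
  · intro c hc
    obtain ⟨m, hm, hm2⟩ := exists_minimal_le_of_wellFoundedLT (· ∈ C) c hc
    exact ⟨m, (hfin.mem_toFinset).2 hm2, hm⟩

lemma krull {A : Type*} [CommRing A] [IsNoetherianRing A] [IsLocalRing A] (J m : Ideal A)
    (hm : m ≠ ⊤) (z : A) (h : ∀ M : ℕ, z ∈ J ⊔ m ^ M) : z ∈ J := by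
  rw [← Ideal.Quotient.eq_zero_iff_mem]
  have h0 := Ideal.iInf_pow_smul_eq_bot_of_isLocalRing (M := A ⧸ J) m hm
  have : Ideal.Quotient.mk J z ∈ (⨅ i : ℕ, m ^ i • (⊤ : Submodule A (A ⧸ J))) := by
    rw [Submodule.mem_iInf]
    intro M
    obtain ⟨j, hj, q, hq, e⟩ := Submodule.mem_sup.1 (h M)
    have : Ideal.Quotient.mk J z = q • (1 : A ⧸ J) := by
      rw [← e, map_add, Ideal.Quotient.eq_zero_iff_mem.2 hj, zero_add, Algebra.smul_def, mul_one]
      rfl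
    rw [this]
    exact Submodule.smul_mem_smul hq trivial
  rw [h0] at this
  exact this

/-- The ideal of monomials of degree `M`. -/
def degSet (p M : ℕ) : Set (Fin p → ℕ) := {a | ∑ i, a i = M}

lemma degSet_finite (p M : ℕ) : (degSet p M).Finite := by
  apply (Set.finite_Icc (0 : Fin p → ℕ) (fun _ => M)).subset
  intro a ha
  refine ⟨fun i => Nat.zero_le _, fun i => ?_⟩
  have h : ∑ i, a i = M := ha
  rw [← h]
  exact Finset.single_le_sum (f := a) (fun _ _ => Nat.zero_le _) (Finset.mem_univ i)

lemma MI_degSet_le (x : Fin p → R) (M : ℕ) :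
    MI x (degSet p M) ≤ Ideal.span (Set.range x) ^ M := by
  unfold MI
  rw [Ideal.span_le]
  rintro _ ⟨a, ha, rfl⟩
  have h : ∑ i, a i = M := ha
  rw [← h, ← Finset.prod_pow_eq_pow_sum]
  exact Ideal.prod_mem_prod fun i _ => Ideal.pow_mem_pow (Ideal.subset_span (Set.mem_range_self i)) _

lemma mul_mono_mem (x : Fin p → R) (C : Set (Fin p → ℕ)) (a : Fin p → ℕ) (r : R)
    (hr : r ∈ Ideal.span (Set.range x)) (h : ∀ i, a + Pi.single i 1 ∈ C) :
    r * mono x a ∈ MI x C := by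
  induction hr using Submodule.span_induction with
  | mem y hy =>
    obtain ⟨i, rfl⟩ := hy
    apply Ideal.subset_span
    refine ⟨_, h i, ?_⟩
    rw [mono_add, mono_single, pow_one, mul_comm]
  | zero => simp
  | add y z _ _ hy hz => rw [add_mul]; exact Ideal.add_mem _ hy hz
  | smul c y _ hy => rw [smul_eq_mul, mul_assoc]; exact Ideal.mul_mem_left _ _ hy

lemma mul_mono_mem_mI (x : Fin p → R) (a : Fin p → ℕ) (r : R)
    (hr : r ∈ Ideal.span (Set.range x)) : r * mono x a ∈ mI x a := by
  apply MI_le_mI x (C := {c | ¬ c ≤ a}) (fun c hc => hc)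
  apply mul_mono_mem x _ a r hr
  intro i hi
  have := hi i
  simp at this

lemma Good.expand {x : Fin p → R} (hx : Good x) (g : R) (C : Set (Fin p → ℕ))
    (hC : ∀ b, b ∉ C → (∃ h ∉ Ideal.span (Set.range x), h * g ∈ mI x b) ∧ ∀ c ∈ C, ¬ c ≤ b)
    (M : ℕ) : g ∈ MI x C ⊔ MI x (degSet p M) := by
  classical
  induction M with
  | zero =>
    apply Ideal.mem_sup_right
    have : MI x (degSet p 0) = ⊤ := by
      rw [Ideal.eq_top_iff_one]
      exact Ideal.subset_span ⟨0, by simp [degSet], mono_zero x⟩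
    rw [this]; trivial
  | succ M ih =>
    obtain ⟨s, hs, q, hq, e⟩ := Submodule.mem_sup.1 ih
    have hq' : q ∈ Submodule.span R (mono x '' ((degSet_finite p M).toFinset : Set _)) := by
      simpa [MI] using hq
    rw [Submodule.mem_span_image_finset_iff_exists_fun'] at hq'
    obtain ⟨r, hr⟩ := hq'
    simp only [smul_eq_mul] at hr
    set D := (degSet_finite p M).toFinset with hD
    have hDm : ∀ a ∈ D, ∑ i, a i = M := by
      intro a ha
      exact ((degSet_finite p M).mem_toFinset).1 ha
    rw [← e, ← hr]
    apply Ideal.add_mem _ (Ideal.mem_sup_left hs)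
    apply Ideal.sum_mem
    intro a ha
    by_cases haC : a ∈ C
    · exact Ideal.mem_sup_left (Ideal.mul_mem_left _ _ (Ideal.subset_span ⟨a, haC, rfl⟩))
    obtain ⟨⟨h, hh, hg⟩, hCa⟩ := hC a haC
    have hrQ : r a ∈ Ideal.span (Set.range x) := by
      by_contra hra
      have hu : h * r a ∉ Ideal.span (Set.range x) := fun hm =>
        (hx.prime.mem_or_mem hm).elim hh hra
      apply hu
      apply hx.key a
      have e1 : h * r a * mono x a = h * g - h * s - h * ∑ b ∈ D.erase a, r b * mono x b := by
        rw [← e, ← hr, ← Finset.add_sum_erase D _ ha]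
        ring
      rw [e1]
      refine Ideal.sub_mem _ (Ideal.sub_mem _ hg (Ideal.mul_mem_left _ _ (MI_le_mI x hCa hs))) ?_
      refine Ideal.mul_mem_left _ _ (Ideal.sum_mem _ fun b hb => Ideal.mul_mem_left _ _ ?_)
      apply mono_mem_mI
      intro hba
      apply Finset.ne_of_mem_erase hb
      have h1 := hDm a ha
      have h2 := hDm b (Finset.mem_of_mem_erase hb)
      funext i
      exact (Finset.sum_eq_sum_iff_of_le (fun i _ => hba i)).1 (h2.trans h1.symm) i (Finset.mem_univ i)
    apply Ideal.mem_sup_right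
    apply mul_mono_mem x _ a _ hrQ
    intro i
    show ∑ j, (a + Pi.single i 1 : Fin p → ℕ) j = M + 1
    simp [Finset.sum_add_distrib, hDm a ha]

lemma Good.exists_rep {x : Fin p → R} (hx : Good x)
    (hN : IsNoetherianRing (@Localization.AtPrime R _ (Ideal.span (Set.range x)) hx.prime))
    (g : R) : ∃ A, IsMinMonRep x g A := by
  classical
  have := hx.prime
  set Q := Ideal.span (Set.range x) with hQ
  let C : Set (Fin p → ℕ) := {b | ¬ ∃ h ∉ Q, h * g ∈ mI x b}
  have hmono : ∀ b c : Fin p → ℕ, c ≤ b → mI x b ≤ mI x c := by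
    intro b c hcb
    unfold mI PI
    rw [Ideal.span_le]
    rintro _ ⟨j, hj, rfl⟩
    exact Ideal.mem_of_dvd _ (pow_dvd_pow (x j) (Nat.succ_le_succ (hcb j)))
      (Ideal.subset_span ⟨j, hj, rfl⟩)
  have hC : ∀ b, b ∉ C → (∃ h ∉ Q, h * g ∈ mI x b) ∧ ∀ c ∈ C, ¬ c ≤ b := by
    intro b hb
    have hb' : ∃ h ∉ Q, h * g ∈ mI x b := not_not.1 hb
    refine ⟨hb', ?_⟩
    intro c hc hcb
    obtain ⟨h, hh, hg⟩ := hb'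
    exact hc ⟨h, hh, hmono b c hcb hg⟩
  have hexp := hx.expand g C hC
  let ι := algebraMap R (Localization.AtPrime Q)
  have hkr : ι g ∈ (MI x C).map ι := by
    apply krull _ (Q.map ι)
    · rw [Localization.AtPrime.map_eq_maximalIdeal]
      exact Ideal.IsPrime.ne_top'
    · intro M
      rw [← Ideal.map_pow, ← Ideal.map_sup]
      exact Ideal.mem_map_of_mem _ (sup_le_sup_left (MI_degSet_le x M) _ (hexp M))
  rw [IsLocalization.algebraMap_mem_map_algebraMap_iff Q.primeCompl] at hkr
  obtain ⟨h, hh, hg⟩ := hkr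
  have hh : h ∉ Q := hh
  obtain ⟨F, hF1, hF2, hF3⟩ := dickson C
  have hCF : MI x C ≤ MI x (F : Set (Fin p → ℕ)) := by
    unfold MI
    rw [Ideal.span_le]
    rintro _ ⟨c, hc, rfl⟩
    obtain ⟨d, hd, hdc⟩ := hF3 c hc
    exact Ideal.mem_of_dvd _ (mono_dvd x hdc) (Ideal.subset_span ⟨d, hd, rfl⟩)
  have hg' : h * g ∈ Submodule.span R (mono x '' (F : Set (Fin p → ℕ))) := hCF hg
  rw [Submodule.mem_span_image_finset_iff_exists_fun'] at hg'
  obtain ⟨r, hr⟩ := hg'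
  simp only [smul_eq_mul] at hr
  refine ⟨F, ⟨h, r, hh, ?_, hr.symm⟩, ?_⟩
  · intro a ha hra
    apply hF1 a ha
    refine ⟨h, hh, ?_⟩
    rw [← hr]
    apply Ideal.sum_mem
    intro b hb
    by_cases hba : b = a
    · subst hba
      exact mul_mono_mem_mI x _ _ hra
    · exact Ideal.mul_mem_left _ _ (mono_mem_mI x fun hle => hba (hF2 b hb a ha hle))
  · intro a ha b hb hne hd
    exact hne (hF2 a ha b hb (hx.le_of_dvd hd))

lemma Good.supp_shift {x : Fin p → R} (hx : Good x) {g : R} {c : Fin p → ℕ} (d : Fin p → ℕ)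
    (hc : c ∈ supp x g) : c + d ∈ supp x (mono x d * g) := by
  classical
  by_cases hex : ∃ A, IsMinMonRep x g A
  · obtain ⟨A, hA⟩ := hex
    rw [hx.supp_eq hA] at hc
    have : IsMinMonRep x (mono x d * g) (A.image (· + d)) := by
      obtain ⟨⟨h, r, hh, hr, e⟩, hmin⟩ := hA
      refine ⟨⟨h, fun b => r (b - d), hh, ?_, ?_⟩, ?_⟩
      · intro b hb
        obtain ⟨a, ha, rfl⟩ := Finset.mem_image.1 hb
        simpa using hr a ha
      · rw [Finset.sum_image (by intro a _ b _ hab; exact add_right_cancel hab)]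
        simp only [add_tsub_cancel_right, mono_add]
        rw [mul_left_comm, e, Finset.mul_sum]
        exact Finset.sum_congr rfl fun a _ => by ring
      · intro b hb c hc hne hd
        obtain ⟨a, ha, rfl⟩ := Finset.mem_image.1 hb
        obtain ⟨a', ha', rfl⟩ := Finset.mem_image.1 hc
        have := hx.le_of_dvd hd
        exact hmin a ha a' ha' (fun h => hne (by rw [h])) (mono_dvd x (by simpa using this))
    rw [hx.supp_eq this]
    simpa using hc
  · unfold supp at hc
    rw [dif_neg hex] at hc
    exact absurd hc (by simp)

lemma mul_mem_MI {y : Fin p → R} {C D E : Set (Fin p → ℕ)} (h : ∀ c ∈ C, ∀ d ∈ D, c + d ∈ E)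
    {z w : R} (hz : z ∈ MI y C) (hw : w ∈ MI y D) : z * w ∈ MI y E := by
  have : MI y C * MI y D ≤ MI y E := by
    unfold MI
    rw [Ideal.span_mul_span', Ideal.span_le]
    rintro _ ⟨_, ⟨c, hc, rfl⟩, _, ⟨d, hd, rfl⟩, rfl⟩
    exact Ideal.subset_span ⟨c + d, h c hc d hd, mono_add _ _ _⟩
  exact this (Ideal.mul_mem_mul hz hw)

section val
variable {L : Type*} [AddCommMonoid L] [LinearOrder L] [IsOrderedCancelAddMonoid L]

lemma val_main (y : Fin p → R) (φ : (Fin p → ℕ) →+ L) (a0 : Fin p → ℕ) (u f : R)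
    (hf : f - u * mono y a0 ∈ MI y {b | φ a0 < φ b}) (I : Ideal R)
    (hI : I ≤ MI y {b | φ a0 < φ b}) (n : ℕ) (a : ℕ → R)
    (ha : ∀ i ∈ Finset.Icc 1 n, a i ∈ I ^ i)
    (e : f ^ n + ∑ i ∈ Finset.Icc 1 n, a i * f ^ (n - i) = 0) :
    u ^ n * mono y (n • a0) ∈ MI y {b | φ (n • a0) < φ b} := by
  have hu : ∀ n : ℕ, u ^ n * mono y (n • a0) ∈ MI y {b | φ (n • a0) ≤ φ b} := fun n =>
    Ideal.mul_mem_left _ _ (Ideal.subset_span ⟨_, le_rfl, rfl⟩)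
  have hGE : ∀ n : ℕ, MI y {b | φ (n • a0) < φ b} ≤ MI y {b | φ (n • a0) ≤ φ b} := fun n =>
    Ideal.span_mono (Set.image_mono fun b hb => le_of_lt hb)
  have hpow : ∀ n : ℕ, f ^ n - u ^ n * mono y (n • a0) ∈ MI y {b | φ (n • a0) < φ b} := by
    intro n
    induction n with
    | zero => simp [mono_zero]
    | succ n ih =>
      have e1 : f ^ (n + 1) - u ^ (n + 1) * mono y ((n + 1) • a0)
          = (f ^ n - u ^ n * mono y (n • a0)) * (f - u * mono y a0)
            + (f ^ n - u ^ n * mono y (n • a0)) * (u * mono y a0)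
            + (u ^ n * mono y (n • a0)) * (f - u * mono y a0) := by
        rw [succ_nsmul, mono_add]; ring
      rw [e1]
      refine Ideal.add_mem _ (Ideal.add_mem _ ?_ ?_) ?_
      · refine mul_mem_MI ?_ ih hf
        intro c hc d hd
        simp only [Set.mem_ofPred_eq, succ_nsmul, map_add] at *
        exact add_lt_add hc hd
      · refine mul_mem_MI (D := {b | φ a0 ≤ φ b}) ?_ ih ?_
        · intro c hc d hd
          simp only [Set.mem_ofPred_eq, succ_nsmul, map_add] at *
          exact add_lt_add_of_lt_of_le hc hd
        · simpa using hu 1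
      · refine mul_mem_MI ?_ (hu n) hf
        intro c hc d hd
        simp only [Set.mem_ofPred_eq, succ_nsmul, map_add] at *
        exact add_lt_add_of_le_of_lt hc hd
  have hfE : ∀ n : ℕ, f ^ n ∈ MI y {b | φ (n • a0) ≤ φ b} := by
    intro n
    have := Ideal.add_mem _ (hGE n (hpow n)) (hu n)
    simpa using this
  have hIp : ∀ i : ℕ, I ^ (i + 1) ≤ MI y {b | φ ((i + 1) • a0) < φ b} := by
    intro i
    induction i with
    | zero => simpa using hI
    | succ i ih =>
      rw [pow_succ, Ideal.mul_le]
      intro r hr s hs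
      refine mul_mem_MI ?_ (ih hr) (hI hs)
      intro c hc d hd
      simp only [Set.mem_ofPred_eq] at *
      rw [succ_nsmul, map_add, map_add]
      exact add_lt_add hc hd
  have hs : ∑ i ∈ Finset.Icc 1 n, a i * f ^ (n - i) ∈ MI y {b | φ (n • a0) < φ b} := by
    apply Ideal.sum_mem
    intro i hi
    have h1 := ha i hi
    rw [Finset.mem_Icc] at hi
    obtain ⟨j, rfl⟩ : ∃ j, i = j + 1 := ⟨i - 1, by omega⟩
    refine mul_mem_MI ?_ (hIp j h1) (hfE (n - (j + 1)))
    intro c hc d hd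
    simp only [Set.mem_ofPred_eq] at *
    have : n • a0 = (j + 1) • a0 + (n - (j + 1)) • a0 := by
      rw [← add_nsmul]; congr 1; omega
    rw [this, map_add, map_add]
    exact add_lt_add_of_lt_of_le hc hd
  have e2 : u ^ n * mono y (n • a0)
      = - (f ^ n - u ^ n * mono y (n • a0)) - ∑ i ∈ Finset.Icc 1 n, a i * f ^ (n - i) := by
    linear_combination e
  rw [e2]
  exact Ideal.sub_mem _ (Ideal.neg_mem_iff _ |>.2 (hpow n)) hs

end val

/-- weight with lexicographic tie-break -/
def wt (w : Fin p → ℝ) : (Fin p → ℕ) →+ (ℝ ×ₗ (Lex (Fin p → ℕ))) where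
  toFun b := toLex (∑ i, w i * (b i : ℝ), toLex b)
  map_zero' := by simp
  map_add' a b := by
    apply ofLex.injective
    simp only [ofLex_add, ofLex_toLex, toLex_add, Prod.mk_add_mk]
    congr 1
    simp [mul_add, Finset.sum_add_distrib]

lemma wt_inj (w : Fin p → ℝ) : Function.Injective (wt w) := by
  intro a b h
  have h1 : (ofLex (wt w a)).2 = (ofLex (wt w b)).2 := by rw [h]
  exact toLex.injective h1

lemma wt_mono {w : Fin p → ℝ} (hw : 0 ≤ w) : Monotone (wt w) := by
  intro a b h
  apply Prod.Lex.toLex_mono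
  refine ⟨?_, Pi.toLex_monotone h⟩
  show ∑ i, w i * (a i : ℝ) ≤ ∑ i, w i * (b i : ℝ)
  exact Finset.sum_le_sum fun i _ => mul_le_mul_of_nonneg_left (by exact_mod_cast h i) (hw i)

lemma wt_lt {w : Fin p → ℝ} {a b : Fin p → ℕ}
    (h : ∑ i, w i * (a i : ℝ) < ∑ i, w i * (b i : ℝ)) : wt w a < wt w b := by
  apply Prod.Lex.toLex_lt_toLex.2
  exact Or.inl h

lemma wt_le {w : Fin p → ℝ} {a b : Fin p → ℕ} (h : wt w a ≤ wt w b) :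
    ∑ i, w i * (a i : ℝ) ≤ ∑ i, w i * (b i : ℝ) := by
  by_contra! hlt
  exact absurd (wt_lt hlt) (not_lt.2 h)

lemma separate (P : Set (Fin p → ℕ)) (hP : ∀ c ∈ P, ∀ d, c + d ∈ P) (a : Fin p → ℕ)
    (ha : toR a ∉ convexHull ℝ (toR '' P)) :
    ∃ w : Fin p → ℝ, 0 ≤ w ∧ ∀ c ∈ P, ∑ i, w i * (a i : ℝ) < ∑ i, w i * (c i : ℝ) := by
  rcases P.eq_empty_or_nonempty with rfl | ⟨c0, hc0⟩
  · exact ⟨0, le_rfl, by simp⟩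
  obtain ⟨F, hF1, -, hF3⟩ := dickson P
  let K : Set (Fin p → ℝ) := convexHull ℝ (toR '' (F : Set (Fin p → ℕ)))
  have hKc : IsCompact K := (F.finite_toSet.image _).isCompact_convexHull ℝ
  let T : Set (Fin p → ℝ) := K + Set.Ici 0
  have hTcl : IsClosed T := isClosed_Ici.add_left_of_isCompact hKc
  have hTcv : Convex ℝ T := (convex_convexHull ℝ _).add (convex_Ici 0)
  have hTsub : T ⊆ convexHull ℝ (toR '' P) := by
    have h1 : Set.Ici (0 : Fin p → ℝ) ⊆ convexHull ℝ (Set.range (toR : (Fin p → ℕ) → _)) := by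
      intro v hv
      have : Set.range (toR : (Fin p → ℕ) → Fin p → ℝ)
          = Set.univ.pi (fun _ => Set.range (Nat.cast : ℕ → ℝ)) := by
        ext z
        constructor
        · rintro ⟨b, rfl⟩ i _
          exact ⟨b i, rfl⟩
        · intro h
          choose b hb using fun i => h i (Set.mem_univ i)
          exact ⟨b, funext hb⟩
      rw [this]
      apply mem_convexHull_pi
      intro i _
      obtain ⟨N, hN⟩ := exists_nat_ge (v i)
      have hseg : v i ∈ segment ℝ (0 : ℝ) (N : ℝ) := by
        rw [segment_eq_Icc (Nat.cast_nonneg N)]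
        exact ⟨hv i, hN⟩
      exact segment_subset_convexHull (s := Set.range (Nat.cast : ℕ → ℝ)) ⟨0, by simp⟩ ⟨N, rfl⟩ hseg
    refine (Set.add_subset_add_left h1).trans ?_
    simp only [K]
    rw [← convexHull_add]
    apply convexHull_mono
    rintro _ ⟨_, ⟨c, hc, rfl⟩, _, ⟨d, rfl⟩, rfl⟩
    refine ⟨c + d, hP c (hF1 c hc) d, ?_⟩
    funext i
    simp [toR]
  have hPT : ∀ c ∈ P, ∀ v : Fin p → ℝ, 0 ≤ v → toR c + v ∈ T := by
    intro c hc v hv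
    obtain ⟨d, hd, hdc⟩ := hF3 c hc
    refine ⟨toR d, subset_convexHull ℝ _ ⟨d, hd, rfl⟩, toR c - toR d + v, ?_, ?_⟩
    · intro i
      have : (d i : ℝ) ≤ c i := by exact_mod_cast hdc i
      have := hv i
      simp only [toR, Pi.zero_apply, Pi.add_apply, Pi.sub_apply] at *
      linarith
    · show toR d + (toR c - toR d + v) = toR c + v
      abel
  obtain ⟨ℓ, u, hu1, hu2⟩ := geometric_hahn_banach_point_closed hTcv hTcl (fun h => ha (hTsub h))
  have hℓ : ∀ v : Fin p → ℝ, ℓ v = ∑ i, ℓ (Pi.single i 1) * v i := by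
    intro v
    conv_lhs => rw [pi_eq_sum_univ' v]
    rw [map_sum]
    refine Finset.sum_congr rfl fun i _ => ?_
    rw [map_smul, smul_eq_mul, mul_comm]
  refine ⟨fun i => ℓ (Pi.single i 1), ?_, ?_⟩
  · intro i
    show 0 ≤ ℓ (Pi.single i 1)
    by_contra! hneg
    obtain ⟨N, hN⟩ := exists_nat_gt ((ℓ (toR c0) - u) / (- ℓ (Pi.single i 1)))
    have h1 := hu2 _ (hPT c0 hc0 ((N : ℝ) • Pi.single i 1) (by
      intro j
      by_cases hj : j = i
      · subst hj; simp
      · simp [Pi.single_eq_of_ne hj]))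
    rw [map_add, map_smul, smul_eq_mul] at h1
    rw [div_lt_iff₀ (by linarith)] at hN
    linarith
  · intro c hc
    have h1 := hu2 _ (hPT c hc 0 le_rfl)
    have h2 := hu1.trans h1
    rw [add_zero, hℓ, hℓ] at h2
    exact h2

lemma Good.supp_intClosure {x : Fin p → R} (hx : Good x)
    (hN : IsNoetherianRing (@Localization.AtPrime R _ (Ideal.span (Set.range x)) hx.prime))
    (I : Ideal R) {f : R} (hf : f ∈ intClosure I) {a : Fin p → ℕ} (ha : a ∈ supp x f) :
    toR a ∈ ΓI x I := by
  classical
  by_contra hcon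
  let P : Set (Fin p → ℕ) := ⋃ g ∈ (I : Set R), supp x g
  have hP : ∀ c ∈ P, ∀ d, c + d ∈ P := by
    intro c hc d
    simp only [P, Set.mem_iUnion] at hc ⊢
    obtain ⟨g, hg, hc⟩ := hc
    exact ⟨mono x d * g, Ideal.mul_mem_left _ _ hg, hx.supp_shift d hc⟩
  obtain ⟨w, hw, hsep⟩ := separate P hP a hcon
  obtain ⟨A, hA⟩ := hx.exists_rep hN f
  rw [hx.supp_eq hA] at ha
  obtain ⟨a0, ha0, hmin⟩ := A.exists_min_image (wt w) ⟨a, ha⟩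
  have hsep0 : ∀ c ∈ P, wt w a0 < wt w c := fun c hc =>
    wt_lt ((wt_le (hmin a ha)).trans_lt (hsep c hc))
  have := hx.prime
  set Q := Ideal.span (Set.range x) with hQ
  let ι := algebraMap R (Localization.AtPrime Q)
  have hunit : ∀ r, r ∉ Q → IsUnit (ι r) := fun r hr =>
    IsLocalization.map_units (Localization.AtPrime Q) (⟨r, hr⟩ : Q.primeCompl)
  let y : Fin p → Localization.AtPrime Q := fun i => ι (x i)
  have hy : ∀ b, mono y b = ι (mono x b) := by
    intro b
    simp [mono, y, map_prod]
  have hMI : ∀ C, (MI x C).map ι = MI y C := by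
    intro C
    unfold MI
    rw [Ideal.map_span, Set.image_image]
    simp only [hy]
  -- membership of rep elements
  have hImem : I.map ι ≤ MI y {b | wt w a0 < wt w b} := by
    rw [Ideal.map_le_iff_le_comap]
    intro g hg
    rw [Ideal.mem_comap]
    obtain ⟨B, hB⟩ := hx.exists_rep hN g
    obtain ⟨⟨h, r, hh, hr, e⟩, -⟩ := id hB
    have h1 : h * g ∈ MI x {b | wt w a0 < wt w b} := by
      rw [e]
      apply sum_mem_MI
      intro b hb
      apply hsep0
      simp only [P, Set.mem_iUnion]
      exact ⟨g, hg, by rw [hx.supp_eq hB]; exact hb⟩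
    have h2 := Ideal.mem_map_of_mem ι h1
    rw [hMI, map_mul] at h2
    exact (Ideal.unit_mul_mem_iff_mem _ (hunit h hh)).1 h2
  obtain ⟨⟨h, r, hh, hr, e⟩, -⟩ := id hA
  obtain ⟨v, hv⟩ := (hunit h hh)
  obtain ⟨n, hn, c, hc, en⟩ := hf
  have hmain := val_main y (wt w) a0 ((↑v⁻¹ : Localization.AtPrime Q) * ι (r a0)) (ι f) (by
    rw [← Ideal.unit_mul_mem_iff_mem _ (hunit h hh), ← hv]
    have e1 : (v : Localization.AtPrime Q) * (ι f - ↑v⁻¹ * ι (r a0) * mono y a0)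
        = ι (∑ b ∈ A.erase a0, r b * mono x b) := by
      have e2 : ∑ b ∈ A.erase a0, r b * mono x b = h * f - r a0 * mono x a0 := by
        rw [e, ← Finset.add_sum_erase A _ ha0]; ring
      rw [e2, map_sub, map_mul, map_mul, ← hv, ← hy, mul_sub, ← mul_assoc, ← mul_assoc,
        Units.mul_inv, one_mul]
    rw [e1, ← hMI]
    apply Ideal.mem_map_of_mem
    apply sum_mem_MI
    intro b hb
    rw [Finset.mem_erase] at hb
    exact lt_of_le_of_ne (hmin b hb.2) fun h => hb.1 (wt_inj w h).symm) (I.map ι) hImem n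
    (fun i => ι (c i)) (by
      intro i hi
      rw [← Ideal.map_pow]
      exact Ideal.mem_map_of_mem _ (hc i hi)) (by
      have := congrArg ι en
      simpa using this)
  rw [Ideal.unit_mul_mem_iff_mem _ (((v⁻¹).isUnit.mul (hunit _ (hr a0 ha0))).pow n), hy, ← hMI,
    IsLocalization.algebraMap_mem_map_algebraMap_iff Q.primeCompl] at hmain
  obtain ⟨m, hm, hmem⟩ := hmain
  obtain ⟨b, hb, hle⟩ := hx.K hm hmem
  exact absurd (wt_mono hw hle) (not_le.2 hb)

end helpers

/-- `Γ_x(I̅) ⊆ Γ_x(overline{I₀})`. -/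
theorem newtonPolyhedron_intClosure_subset {R : Type*} [CommRing R] {p : ℕ}
    (x : Fin p → R) (hR : IsRegularDomain R) (hx : IsGRSOP x) (I : Ideal R) :
    Γ x (intClosure I) ⊆ Γ x (intClosure (idealZero x I)) := by
  have hg := good_of_grsop hx
  have hN := (hR.2 _ hg.prime).1
  apply convexHull_mono
  apply Set.image_mono
  intro a ha
  simp only [Set.mem_iUnion] at ha ⊢
  obtain ⟨f, hf, ha⟩ := ha
  have h1 := hg.supp_intClosure hN I hf ha
  refine ⟨mono x a, ?_, hg.mem_supp_mono a⟩
  have h2 : mono x a ∈ idealZero x I := Ideal.subset_span ⟨a, h1, rfl⟩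
  refine ⟨1, one_pos, fun _ => - mono x a, ?_, by simp⟩
  intro i hi
  have : i = 1 := by simpa using hi
  subst this
  rw [pow_one]
  exact (Ideal.neg_mem_iff _).2 h2

end NND
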